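/- Let m ≥ 2 be an integer, let e be a generating element of the cyclic group C_m, and let k = ⌊log₂ m⌋. Then the sequence e, 2e, 4e, …, 2^{k−1}e (of length k) has no plus-minus weighted zero-subsum; consequently D_±(C_m) ≥ ⌊log₂ m⌋ + 1. -/

import Mathlib

open Finset

/-- A sequence `g` over `G` has an `A`-weighted zero-subsum: there is a nonempty
index set `I` and weights `a i ∈ A` for `i ∈ I` with `∑ i ∈ I, a i • g i = 0`. -/
def HasWZS (A : Set ℤ) {G : Type*} [AddCommGroup G] {ℓ : ℕ} (g : Fin ℓ → G) : Prop :=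
  ∃ (I : Finset (Fin ℓ)) (a : Fin ℓ → ℤ), I.Nonempty ∧ (∀ i ∈ I, a i ∈ A) ∧
    ∑ i ∈ I, a i • g i = 0

/-- The `A`-weighted Davenport constant of `G`: the smallest `ℓ` such that every
sequence of length `ℓ` over `G` has an `A`-weighted zero-subsum. -/
noncomputable def DavW (A : Set ℤ) (G : Type*) [AddCommGroup G] : ℕ :=
  sInf {ℓ : ℕ | ∀ g : Fin ℓ → G, HasWZS A g}

/-- The plus-minus weighted Davenport constant. -/
noncomputable def Davpm (G : Type*) [AddCommGroup G] : ℕ :=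
  DavW ({1, -1} : Set ℤ) G

/-!
An integer combination of `1, b, …, b ^ (k - 1)` whose coefficients are not all zero and have
absolute value less than `b` is nonzero and of absolute value less than `b ^ k`. Hence it cannot
annihilate an element `e` of order at least `b ^ k`; for `b = 2` the coefficients are `0` and `±1`.
A sequence without weighted zero-subsum bounds the Davenport constant from below as soon as some
length forces a zero-subsum, and over a finite group the length `Nat.card G` does, since two initial
segments of the sequence have the same sum.
-/

section SignedDigits

variable {b : ℤ} {k : ℕ} {c : Fin k → ℤ}

lemma abs_sum_mul_pow_lt_pow (hc : ∀ i, |c i| < b) : |∑ i, c i * b ^ (i : ℕ)| < b ^ k := by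
  have term_le (i : Fin k) : |c i * b ^ (i : ℕ)| ≤ (b - 1) * b ^ (i : ℕ) := by
    have hb : 0 ≤ b := (abs_nonneg _).trans (hc i).le
    rw [abs_mul, abs_of_nonneg (pow_nonneg hb _)]
    exact mul_le_mul_of_nonneg_right (Int.le_sub_one_of_lt (hc i)) (pow_nonneg hb _)
  calc |∑ i, c i * b ^ (i : ℕ)|
      ≤ ∑ i : Fin k, (b - 1) * b ^ (i : ℕ) :=
        (abs_sum_le_sum_abs _ _).trans (sum_le_sum fun i _ ↦ term_le i)
    _ = b ^ k - 1 := by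
        rw [← mul_sum, Fin.sum_univ_eq_sum_range (b ^ ·), mul_geom_sum]
    _ < b ^ k := sub_one_lt _

lemma eq_zero_of_sum_mul_pow_eq_zero (hc : ∀ i, |c i| < b)
    (hsum : ∑ i, c i * b ^ (i : ℕ) = 0) : c = 0 := by
  induction k with
  | zero => exact Subsingleton.elim _ _
  | succ k ih =>
    have hb : b ≠ 0 := ((abs_nonneg _).trans_lt (hc 0)).ne'
    rw [Fin.sum_univ_castSucc] at hsum
    simp only [Fin.val_castSucc, Fin.val_last] at hsum
    have lower_eq_zero : ∑ i : Fin k, c i.castSucc * b ^ (i : ℕ) = 0 :=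
      Int.eq_zero_of_abs_lt_dvd ⟨-c (Fin.last k), by linear_combination hsum⟩
        (abs_sum_mul_pow_lt_pow fun i ↦ hc i.castSucc)
    have last_eq_zero : c (Fin.last k) = 0 := by simpa [lower_eq_zero, hb] using hsum
    have init_eq_zero := ih (fun i ↦ hc i.castSucc) lower_eq_zero
    exact funext (Fin.lastCases last_eq_zero (congrFun init_eq_zero))

end SignedDigits

section ZeroSubsums

variable {A : Set ℤ} {G : Type*} [AddCommGroup G] {k ℓ : ℕ}

lemma HasWZS.exists_ne_zero_sum_zsmul_eq_zero {g : Fin ℓ → G} (hg : HasWZS A g) (hA : 0 ∉ A) :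
    ∃ c : Fin ℓ → ℤ, c ≠ 0 ∧ (∀ i, c i = 0 ∨ c i ∈ A) ∧ ∑ i, c i • g i = 0 := by
  obtain ⟨I, a, ⟨j, hj⟩, ha, hsum⟩ := hg
  refine ⟨fun i ↦ if i ∈ I then a i else 0, fun h ↦ hA ?_, fun i ↦ ?_, ?_⟩
  · have : a j = 0 := by simpa [hj] using congrFun h j
    exact this ▸ ha j hj
  · by_cases hi : i ∈ I
    · simp [hi, ha i hi]
    · simp [hi]
  · simpa [ite_smul] using hsum

lemma HasWZS.of_comp_embedding {g : Fin ℓ → G} (f : Fin k ↪ Fin ℓ) (hg : HasWZS A (g ∘ f)) :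
    HasWZS A g := by
  obtain ⟨I, a, hI, ha, hsum⟩ := hg
  refine ⟨I.map f, Function.extend f a 0, hI.map, ?_, ?_⟩
  · simpa [f.injective.extend_apply] using ha
  · simpa [f.injective.extend_apply] using hsum

lemma exists_nonempty_sum_eq_zero_of_card_le [Finite G] (hℓ : Nat.card G ≤ ℓ) (g : Fin ℓ → G) :
    ∃ I : Finset (Fin ℓ), I.Nonempty ∧ ∑ i ∈ I, g i = 0 := by
  let initial (n : Fin (ℓ + 1)) : Finset (Fin ℓ) := {i | i.castSucc < n}
  have not_injective : ¬ Function.Injective fun n ↦ ∑ i ∈ initial n, g i := fun h ↦ by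
    have := Nat.card_le_card_of_injective _ h
    rw [Nat.card_fin] at this
    omega
  obtain ⟨s, t, hst, hlt⟩ : ∃ s t, ∑ i ∈ initial s, g i = ∑ i ∈ initial t, g i ∧ s < t := by
    obtain ⟨s, t, hst, hne⟩ := Function.not_injective_iff.mp not_injective
    rcases hne.lt_or_gt with hlt | hlt
    exacts [⟨s, t, hst, hlt⟩, ⟨t, s, hst.symm, hlt⟩]
  have initial_subset : initial s ⊆ initial t :=
    monotone_filter_right _ fun _ _ hi ↦ hi.trans hlt
  refine ⟨initial t \ initial s, ⟨s.castPred (Fin.ne_last_of_lt hlt), ?_⟩, ?_⟩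
  · simp [initial, hlt]
  · rw [sum_sdiff_eq_sub initial_subset, hst, sub_self]

lemma hasWZS_of_card_le [Finite G] (hA : A.Nonempty) (hℓ : Nat.card G ≤ ℓ) (g : Fin ℓ → G) :
    HasWZS A g := by
  obtain ⟨a, ha⟩ := hA
  obtain ⟨I, hI, hsum⟩ := exists_nonempty_sum_eq_zero_of_card_le hℓ g
  exact ⟨I, fun _ ↦ a, hI, fun _ _ ↦ ha, by rw [← smul_sum, hsum, smul_zero]⟩

lemma lt_davW_of_not_hasWZS [Finite G] (hA : A.Nonempty) {g : Fin k → G} (hg : ¬ HasWZS A g) :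
    k < DavW A G := by
  refine le_csInf (s := {ℓ | ∀ g : Fin ℓ → G, HasWZS A g})
    ⟨Nat.card G, hasWZS_of_card_le hA le_rfl⟩ fun ℓ hℓ ↦ ?_
  by_contra! hlt
  exact hg ((hℓ _).of_comp_embedding (Fin.castLEEmb (Nat.le_of_lt_succ hlt)))

lemma not_hasWZS_pow_smul {b : ℕ} (hA : ∀ a ∈ A, a ≠ 0 ∧ |a| < b) {e : G}
    (hk : b ^ k ≤ addOrderOf e) : ¬ HasWZS A fun i : Fin k ↦ b ^ (i : ℕ) • e := by
  intro h
  obtain ⟨c, hc_ne, hcA, hsum⟩ := h.exists_ne_zero_sum_zsmul_eq_zero fun h0 ↦ (hA 0 h0).1 rfl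
  have hb : 0 < (b : ℤ) := by
    obtain ⟨j, hj⟩ := Function.ne_iff.mp hc_ne
    exact (abs_nonneg _).trans_lt (hA _ ((hcA j).resolve_left hj)).2
  have abs_lt (i : Fin k) : |c i| < b := by
    rcases hcA i with hi | hi
    · simpa [hi] using hb
    · exact (hA _ hi).2
  have zsmul_eq_zero : (∑ i, c i * (b : ℤ) ^ (i : ℕ)) • e = 0 := by
    rw [← hsum, sum_smul]
    refine sum_congr rfl fun i _ ↦ ?_
    rw [mul_smul, ← natCast_zsmul e, Nat.cast_pow]
  refine hc_ne (eq_zero_of_sum_mul_pow_eq_zero abs_lt ?_)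
  refine Int.eq_zero_of_abs_lt_dvd (addOrderOf_dvd_iff_zsmul_eq_zero.mpr zsmul_eq_zero) ?_
  exact (abs_sum_mul_pow_lt_pow abs_lt).trans_le (by exact_mod_cast hk)

end ZeroSubsums

theorem stmt19_general {G : Type*} [AddCommGroup G] [Finite G] {A : Set ℤ} {b : ℕ}
    (hA : A.Nonempty) (hAb : ∀ a ∈ A, a ≠ 0 ∧ |a| < b) (e : G) :
    ¬ HasWZS A (fun i : Fin (Nat.log b (addOrderOf e)) ↦ b ^ (i : ℕ) • e) ∧
      Nat.log b (addOrderOf e) + 1 ≤ DavW A G := by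
  have not_hasWZS := not_hasWZS_pow_smul hAb (Nat.pow_log_le_self b (addOrderOf_pos e).ne')
  exact ⟨not_hasWZS, lt_davW_of_not_hasWZS hA not_hasWZS⟩

theorem stmt19 (m : ℕ) (hm : 2 ≤ m) (e : ZMod m) (he : addOrderOf e = m) :
    ¬ HasWZS ({1, -1} : Set ℤ)
        (fun i : Fin (Nat.log 2 m) => (2 ^ (i : ℕ)) • e) ∧
    Nat.log 2 m + 1 ≤ Davpm (ZMod m) := by
  have : NeZero m := ⟨by omega⟩
  have general := stmt19_general (A := {1, -1}) (b := 2) (by simp) (by simp) e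
  rwa [he] at general
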